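/- arXiv:math/9805120 — 4 statements merged into one kernel-verified Lean document; each statement's English description precedes it below -/
import Mathlib

section
/- Let A be any diagonal N×N complex matrix whose diagonal entries satisfy A_{aa} · A_{a′a′} = 1 for every a. Then A is a quantum orthogonal matrix: R · (A ⊗ A) = (A ⊗ A) · R (where A ⊗ A is the Kronecker product, expressing the RTT relation R₁₂A₁A₂ = A₂A₁R₁₂ for a matrix with numerical entries), and Aᵗ C A = C and A C Aᵗ = C. -/
noncomputable section

open Matrix Kronecker

/-- The integer `2·ρ_a` for the 1-indexed index `a` of `{1,…,N}` (represented by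
`a : Fin N`, whose 1-indexed value is `a.1 + 1`), where
`(ρ_1,…,ρ_N) = (N/2−1, …, 1/2, 0, −1/2, …, −N/2+1)` for `N` odd and
`(N/2−1, …, 1, 0, 0, −1, …, −N/2+1)` for `N` even.  Powers `q^{ρ_a}` are
interpreted as `p^(2·ρ_a)`. -/
def rhoTwo (N : ℕ) (a : Fin N) : ℤ :=
  if 2 * ((a.1 : ℤ) + 1) < (N : ℤ) + 1 then (N : ℤ) - 2 * ((a.1 : ℤ) + 1)
  else if (N : ℤ) + 1 < 2 * ((a.1 : ℤ) + 1) then (N : ℤ) + 2 - 2 * ((a.1 : ℤ) + 1)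
  else 0

/-- The quantum metric `C_{ab} = q^{−ρ_a} δ_{a,b′} = p^{−2ρ_a} δ_{b,a′}`, where the
primed index `a′ = N+1−a` is `Fin.rev a` in the 0-indexed encoding. -/
def qMetric (N : ℕ) (p : ℂ) : Matrix (Fin N) (Fin N) ℂ :=
  Matrix.of fun a b => if b = a.rev then p ^ (-(rhoTwo N a)) else 0

/-- The quantum orthogonal R-matrix, rows and columns indexed by pairs `(a,b)`, with
`q = p²`; its only nonzero entries are those listed in FRT:
`R^{aa}_{aa} = q` (`a ≠ a′`), `R^{aa}_{aa} = 1` (`a = a′`), `R^{aa′}_{aa′} = q⁻¹`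
(`a ≠ a′`), `R^{ab}_{ab} = 1` (`a ≠ b`, `a′ ≠ b`), `R^{ab}_{ba} = q − q⁻¹`
(`a > b`, `a′ ≠ b`), `R^{aa′}_{a′a} = (q − q⁻¹)(1 − q^{ρ_a−ρ_{a′}})` (`a > a′`), and
`R^{aa′}_{bb′} = −(q − q⁻¹) q^{ρ_a−ρ_b}` (`a > b`, `a′ ≠ b`). -/
def qRmat (N : ℕ) (p : ℂ) : Matrix (Fin N × Fin N) (Fin N × Fin N) ℂ :=
  Matrix.of fun x y =>
    if x.1 = x.2 ∧ y.1 = x.1 ∧ y.2 = x.1 then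
      (if x.1 = x.1.rev then 1 else p ^ (2 : ℤ))
    else if x.2 = x.1.rev ∧ x.1 ≠ x.1.rev ∧ y = x then (p ^ (2 : ℤ))⁻¹
    else if x.1 ≠ x.2 ∧ x.1.rev ≠ x.2 ∧ y = x then 1
    else if x.2 < x.1 ∧ x.1.rev ≠ x.2 ∧ y.1 = x.2 ∧ y.2 = x.1 then
      p ^ (2 : ℤ) - (p ^ (2 : ℤ))⁻¹
    else if x.2 = x.1.rev ∧ x.1.rev < x.1 ∧ y.1 = x.1.rev ∧ y.2 = x.1 then
      (p ^ (2 : ℤ) - (p ^ (2 : ℤ))⁻¹) * (1 - p ^ (2 * rhoTwo N x.1))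
    else if x.2 = x.1.rev ∧ y.1 < x.1 ∧ x.1.rev ≠ y.1 ∧ y.2 = y.1.rev then
      -(p ^ (2 : ℤ) - (p ^ (2 : ℤ))⁻¹) * p ^ (rhoTwo N x.1 - rhoTwo N y.1)
    else 0

/-- A nonzero entry of the R-matrix joins two pairs of indices of equal weight. -/
lemma qRmat_weight_eq {N : ℕ} {p : ℂ} {d : Fin N → ℂ} (hd : ∀ a : Fin N, d a * d a.rev = 1)
    {x y : Fin N × Fin N} (h : qRmat N p x y ≠ 0) : d x.1 * d x.2 = d y.1 * d y.2 := by
  obtain ⟨a, b⟩ := x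
  obtain ⟨c, e⟩ := y
  simp only [qRmat, Matrix.of_apply, Prod.mk.injEq] at h
  split_ifs at h <;> grind

/-- Conjugating the quantum metric by the diagonal matrix leaves it unchanged. -/
lemma diagonal_mul_qMetric_mul_diagonal {N : ℕ} (p : ℂ) {d : Fin N → ℂ}
    (hd : ∀ a : Fin N, d a * d a.rev = 1) :
    Matrix.diagonal d * qMetric N p * Matrix.diagonal d = qMetric N p := by
  ext a b
  rw [Matrix.mul_diagonal, Matrix.diagonal_mul, qMetric, Matrix.of_apply]
  split_ifs with h
  · rw [h, mul_right_comm, hd, one_mul]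
  · simp

/-- Any diagonal N×N complex matrix `A` whose diagonal entries satisfy
`A_{aa} · A_{a′a′} = 1` for every `a` is a quantum orthogonal matrix:
`R · (A ⊗ A) = (A ⊗ A) · R` (the RTT relation `R₁₂A₁A₂ = A₂A₁R₁₂` for a matrix with
numerical entries, `A ⊗ A` being the Kronecker product), `Aᵗ C A = C`, and
`A C Aᵗ = C`. -/
theorem diagonal_is_quantum_orthogonal (N : ℕ) (hN : 3 ≤ N) (p : ℂ) (hp : p ≠ 0)
    (d : Fin N → ℂ) (hd : ∀ a : Fin N, d a * d a.rev = 1) :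
    qRmat N p * (Matrix.diagonal d ⊗ₖ Matrix.diagonal d) =
      (Matrix.diagonal d ⊗ₖ Matrix.diagonal d) * qRmat N p ∧
    (Matrix.diagonal d)ᵀ * qMetric N p * Matrix.diagonal d = qMetric N p ∧
    Matrix.diagonal d * qMetric N p * (Matrix.diagonal d)ᵀ = qMetric N p := by
  refine ⟨?_, ?_, ?_⟩
  · ext x y
    rw [Matrix.diagonal_kronecker_diagonal, Matrix.mul_diagonal, Matrix.diagonal_mul]
    by_cases h : qRmat N p x y = 0
    · rw [h, zero_mul, mul_zero]
    · rw [qRmat_weight_eq hd h, mul_comm]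
  · rw [Matrix.diagonal_transpose, diagonal_mul_qMetric_mul_diagonal p hd]
  · rw [Matrix.diagonal_transpose, diagonal_mul_qMetric_mul_diagonal p hd]
end
end

section
/- Let N = 2n be even and let D be the N×N matrix equal to the identity except that D_{n,n} = D_{n+1,n+1} = 0 and D_{n,n+1} = D_{n+1,n} = 1 (the matrix exchanging the indices n and n+1). Then: (i) D² = 1_N; (ii) R · (D ⊗ D) = (D ⊗ D) · R (the RTT relation for a matrix with numerical entries); (iii) Dᵗ C D = C and D C Dᵗ = C; (iv) Cᵗ D Cᵗ = D, which (D being real) is the reality condition conj(D) = Cᵗ D Cᵗ ensuring that the involutive automorphism T ↦ D T D⁻¹ commutes with the compact conjugation of SO_q(N). -/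
noncomputable section

open Matrix Kronecker

/-- The map exchanging the two middle indices of `Fin (2 * n)` and fixing all others. -/
def midSwapFun (n : ℕ) (a : Fin (2 * n)) : Fin (2 * n) :=
  if a.1 + 1 = n ∨ a.1 = n then a.rev else a

theorem midSwapFun_val (n : ℕ) (a : Fin (2 * n)) :
    (midSwapFun n a).1 = if a.1 + 1 = n then n else if a.1 = n then n - 1 else a.1 := by
  unfold midSwapFun
  split_ifs <;> (try simp only [Fin.val_rev]) <;> omega

theorem midSwapFun_involutive (n : ℕ) : Function.Involutive (midSwapFun n) := by
  intro a
  ext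
  simp only [midSwapFun_val]
  split_ifs <;> omega

/-- The permutation of `Fin (2 * n)` exchanging the two middle indices. -/
def midSwap (n : ℕ) : Equiv.Perm (Fin (2 * n)) := (midSwapFun_involutive n).toPerm

theorem midSwap_val (n : ℕ) (a : Fin (2 * n)) :
    (midSwap n a).1 = if a.1 + 1 = n then n else if a.1 = n then n - 1 else a.1 :=
  midSwapFun_val n a

theorem midSwap_midSwap (n : ℕ) (a : Fin (2 * n)) : midSwap n (midSwap n a) = a :=
  midSwapFun_involutive n a

theorem rev_midSwap (n : ℕ) (a : Fin (2 * n)) : (midSwap n a).rev = midSwap n a.rev := by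
  ext
  simp only [midSwap_val, Fin.val_rev]
  split_ifs <;> omega

theorem rhoTwo_midSwap (n : ℕ) (a : Fin (2 * n)) :
    rhoTwo (2 * n) (midSwap n a) = rhoTwo (2 * n) a := by
  simp only [rhoTwo, midSwap_val]
  split_ifs <;> omega

theorem rhoTwo_rev (N : ℕ) (a : Fin N) : rhoTwo N a.rev = -rhoTwo N a := by
  simp only [rhoTwo, Fin.val_rev]
  split_ifs <;> omega

theorem midSwap_lt_midSwap_iff (n : ℕ) {a b : Fin (2 * n)} (h : b.rev ≠ a) :
    midSwap n a < midSwap n b ↔ a < b := by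
  simp only [ne_eq, Fin.ext_iff, Fin.val_rev] at h
  simp only [Fin.lt_def, midSwap_val]
  split_ifs <;> omega

theorem midSwap_lt_midSwap_iff_of_rhoTwo_ne_zero (n : ℕ) {a b : Fin (2 * n)}
    (h : rhoTwo (2 * n) b ≠ 0) : midSwap n a < midSwap n b ↔ a < b := by
  simp only [rhoTwo] at h
  simp only [Fin.lt_def, midSwap_val]
  split_ifs at h ⊢ <;> omega

theorem qMetric_midSwap (n : ℕ) (p : ℂ) (a b : Fin (2 * n)) :
    qMetric (2 * n) p (midSwap n a) (midSwap n b) = qMetric (2 * n) p a b := by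
  simp [qMetric, rev_midSwap, rhoTwo_midSwap]

theorem qRmat_midSwap (n : ℕ) (p : ℂ) (x y : Fin (2 * n) × Fin (2 * n)) :
    qRmat (2 * n) p (x.map (midSwap n) (midSwap n)) (y.map (midSwap n) (midSwap n)) =
      qRmat (2 * n) p x y := by
  obtain ⟨a, b⟩ := x
  obtain ⟨c, d⟩ := y
  have hba : midSwap n b < midSwap n a ∧ a.rev ≠ b ∧ c = b ∧ d = a ↔
      b < a ∧ a.rev ≠ b ∧ c = b ∧ d = a := by
    have := @midSwap_lt_midSwap_iff n b a
    tauto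
  have hca : b = a.rev ∧ midSwap n c < midSwap n a ∧ a.rev ≠ c ∧ d = c.rev ↔
      b = a.rev ∧ c < a ∧ a.rev ≠ c ∧ d = c.rev := by
    have := @midSwap_lt_midSwap_iff n c a
    tauto
  simp only [qRmat, Matrix.of_apply, Prod.map_apply, Prod.mk.injEq, rev_midSwap, rhoTwo_midSwap,
    (midSwap n).injective.eq_iff, (midSwap n).injective.ne_iff, hba, hca]
  by_cases h : rhoTwo (2 * n) a = 0
  · by_cases hc : c = a.rev
    · simp [h, hc]
    · simp [hc]
  · simp only [midSwap_lt_midSwap_iff_of_rhoTwo_ne_zero n h]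

theorem permMatrix_kronecker_permMatrix {ι R : Type*} [DecidableEq ι] [NonAssocSemiring R]
    (σ : Equiv.Perm ι) :
    σ.permMatrix R ⊗ₖ σ.permMatrix R = Equiv.Perm.permMatrix R (σ.prodCongr σ) := by
  ext ⟨a, b⟩ ⟨c, d⟩
  by_cases h : σ a = c <;> simp [Equiv.Perm.permMatrix, PEquiv.toMatrix_apply, h]

theorem mul_permMatrix_comm {ι R : Type*} [Fintype ι] [DecidableEq ι] [NonAssocSemiring R]
    (σ : Equiv.Perm ι) (M : Matrix ι ι R) (h : ∀ a b, M (σ a) (σ b) = M a b) :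
    M * σ.permMatrix R = σ.permMatrix R * M := by
  ext a b
  rw [Equiv.Perm.permMatrix, PEquiv.mul_toMatrix_toPEquiv, PEquiv.toMatrix_toPEquiv_mul]
  simpa using (h a (σ.symm b)).symm

theorem exchange_eq_permMatrix (n : ℕ) :
    (Matrix.of (fun a b : Fin (2 * n) =>
        if a.1 + 1 = n ∧ b.1 + 1 = n + 1 then 1
        else if a.1 + 1 = n + 1 ∧ b.1 + 1 = n then 1
        else if a = b ∧ a.1 + 1 ≠ n ∧ a.1 + 1 ≠ n + 1 then 1
        else 0) : Matrix (Fin (2 * n)) (Fin (2 * n)) ℂ) = (midSwap n).permMatrix ℂ := by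
  ext a b
  simp only [Equiv.Perm.permMatrix, PEquiv.toMatrix_apply, Matrix.of_apply,
    Equiv.toPEquiv_apply, Option.mem_def, Option.some.injEq, Fin.ext_iff, midSwap_val]
  split_ifs <;> first | rfl | omega

theorem permMatrix_midSwap_mul_self (n : ℕ) :
    (midSwap n).permMatrix ℂ * (midSwap n).permMatrix ℂ = 1 := by
  rw [← Matrix.permMatrix_mul, show midSwap n * midSwap n = 1 from Equiv.ext (midSwap_midSwap n),
    Matrix.permMatrix_one]

theorem transpose_permMatrix_midSwap (n : ℕ) :
    ((midSwap n).permMatrix ℂ)ᵀ = (midSwap n).permMatrix ℂ := by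
  rw [Matrix.transpose_permMatrix]
  rfl

theorem qMetric_mul_self (N : ℕ) {p : ℂ} (hp : p ≠ 0) : qMetric N p * qMetric N p = 1 := by
  ext a b
  simp only [Matrix.mul_apply, qMetric, Matrix.of_apply, ite_mul, zero_mul, Finset.sum_ite_eq',
    Finset.mem_univ, if_true, Fin.rev_rev, rhoTwo_rev, Matrix.one_apply]
  by_cases h : b = a
  · simp [h, zpow_ne_zero _ hp]
  · simp [h, Ne.symm h]

/-- Let `N = 2n` be even and let `D` be the identity matrix except that
the indices `n` and `n+1` (1-indexed) are exchanged.  Then (i) `D² = 1`; (ii)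
`R · (D ⊗ D) = (D ⊗ D) · R`; (iii) `Dᵗ C D = C` and `D C Dᵗ = C`; (iv)
`Cᵗ D Cᵗ = D`, which (`D` being real) is the reality condition `conj D = Cᵗ D Cᵗ`
ensuring that the involutive automorphism `T ↦ D T D⁻¹` commutes with the compact
conjugation of `SO_q(N)`. -/
theorem exchange_matrix_properties (n : ℕ) (hn : 2 ≤ n) (p : ℂ) (hp : p ≠ 0) :
    ∀ D : Matrix (Fin (2 * n)) (Fin (2 * n)) ℂ,
      D = Matrix.of (fun a b : Fin (2 * n) =>
        if a.1 + 1 = n ∧ b.1 + 1 = n + 1 then 1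
        else if a.1 + 1 = n + 1 ∧ b.1 + 1 = n then 1
        else if a = b ∧ a.1 + 1 ≠ n ∧ a.1 + 1 ≠ n + 1 then 1
        else 0) →
      D * D = 1 ∧
      qRmat (2 * n) p * (D ⊗ₖ D) = (D ⊗ₖ D) * qRmat (2 * n) p ∧
      Dᵀ * qMetric (2 * n) p * D = qMetric (2 * n) p ∧
      D * qMetric (2 * n) p * Dᵀ = qMetric (2 * n) p ∧
      (qMetric (2 * n) p)ᵀ * D * (qMetric (2 * n) p)ᵀ = D := by
  rintro D rfl
  rw [exchange_eq_permMatrix, transpose_permMatrix_midSwap]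
  have hDD := permMatrix_midSwap_mul_self n
  have hDC := mul_permMatrix_comm (midSwap n) (qMetric (2 * n) p) (qMetric_midSwap n p)
  have hDCD : (midSwap n).permMatrix ℂ * qMetric (2 * n) p * (midSwap n).permMatrix ℂ =
      qMetric (2 * n) p := by
    rw [← hDC, mul_assoc, hDD, mul_one]
  refine ⟨hDD, ?_, hDCD, hDCD, ?_⟩
  · rw [permMatrix_kronecker_permMatrix]
    exact mul_permMatrix_comm _ _ (qRmat_midSwap n p)
  · rw [← transpose_permMatrix_midSwap, ← Matrix.transpose_mul, ← Matrix.transpose_mul, ← hDC,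
      ← mul_assoc, qMetric_mul_self _ hp, one_mul]
end
end

section
/- Let N = 2n be even and define M ∈ M_N(ℂ) by: M_{ab} = (1/√2)(δ_{ab} + δ_{a,b′}) for a ≤ n−1; M_{n,n} = M_{n,n+1} = 1/√2; M_{n+1,n} = −1/√2, M_{n+1,n+1} = 1/√2; and M_{ab} = (1/√2)(i δ_{a,b′} − i δ_{ab}) for a ≥ n+2 (all other entries zero). Then M is invertible and (M⁻¹)ᵗ J M⁻¹ is a real diagonal matrix with exactly one diagonal entry equal to −1 and the remaining N−1 diagonal entries equal to +1, i.e. the q = 1 metric acquires Lorentzian signature (N−1, 1). This identifies the real form associated to the conjugation ∗♯ (the compact conjugation composed with the involutive automorphism given by the index-exchange matrix) as the q-Lorentz group SO_q(N−1, 1). -/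
noncomputable section

open Matrix

/-- The `q = 1` quantum metric of `SO_q(N)`: `J_{ab} = δ_{a,b′}` with `a′ = N+1−a`
(`Fin.rev` in the 0-indexed encoding). -/
def Jmet (N : ℕ) : Matrix (Fin N) (Fin N) ℂ :=
  Matrix.of fun a b => if b = a.rev then 1 else 0


theorem Jmet_mul_self (N : ℕ) : Jmet N * Jmet N = 1 := by
  ext a b
  simp only [Jmet, Matrix.mul_apply, Matrix.one_apply, Matrix.of_apply, ite_mul, one_mul, zero_mul,
    Finset.sum_ite_eq', Finset.mem_univ, if_true, Fin.rev_rev, eq_comm (a := b)]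

theorem Jmet_transpose (N : ℕ) : (Jmet N)ᵀ = Jmet N := by
  ext a b
  simp only [Jmet, Matrix.transpose_apply, Matrix.of_apply, ← Fin.rev_eq_iff, eq_comm (b := b)]

/-- The Gram matrix, with respect to `J`, of the rows `α a • e_a + β a • e_{a′}`. -/
theorem mul_Jmet_mul_transpose_apply {N : ℕ} (α β : Fin N → ℂ)
    {M : Matrix (Fin N) (Fin N) ℂ}
    (hM : ∀ a b, M a b = α a * (if b = a then 1 else 0) + β a * (if b = a.rev then 1 else 0))
    (a b : Fin N) :
    (M * Jmet N * Mᵀ) a b =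
      (if b = a then α a * β b + β a * α b else 0) +
        (if b = a.rev then α a * α b + β a * β b else 0) := by
  have hMJ : ∀ c, (M * Jmet N) a c = M a c.rev := by
    intro c
    simp [Jmet, Matrix.mul_apply, ← Fin.rev_eq_iff (i := c)]
  rw [Matrix.mul_apply]
  simp only [hMJ, Matrix.transpose_apply, hM b, mul_add, Finset.sum_add_distrib, mul_ite, mul_one,
    mul_zero, Finset.sum_ite_eq', Finset.mem_univ, if_true, Fin.rev_rev]
  simp only [hM a, Fin.rev_eq_iff, Fin.rev_rev]
  split_ifs <;> ring

/-- If `M` carries the inverse metric `J` to an involution `D`, it carries `J` to `D`. -/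
theorem isUnit_det_and_inv_transpose_mul_mul_inv {m R : Type*} [Fintype m] [DecidableEq m]
    [CommRing R] {M J D : Matrix m m R} (hJ : J * J = 1) (hJt : Jᵀ = J) (hD : D * D = 1)
    (hDt : Dᵀ = D) (h : M * J * Mᵀ = D) :
    IsUnit M.det ∧ (M⁻¹)ᵀ * J * M⁻¹ = D := by
  have hinv : M * (J * Mᵀ * D) = 1 := by
    rw [← hD, ← h]
    simp only [Matrix.mul_assoc]
  refine ⟨Matrix.isUnit_det_of_right_inverse hinv, ?_⟩
  rw [Matrix.inv_eq_right_inv hinv]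
  calc (J * Mᵀ * D)ᵀ * J * (J * Mᵀ * D)
      = D * M * J * (J * J) * Mᵀ * D := by
        simp only [Matrix.transpose_mul, Matrix.transpose_transpose, hJt, hDt, Matrix.mul_assoc]
    _ = D * (M * J * Mᵀ) * D := by
        simp only [hJ, Matrix.mul_one, Matrix.mul_assoc]
    _ = D := by rw [h, hD, Matrix.one_mul]

/-- For `N = 2n` even, the matrix `M` with
`M_{ab} = (1/√2)(δ_{ab} + δ_{a,b′})` for `a ≤ n−1`,
`M_{n,n} = M_{n,n+1} = 1/√2`, `M_{n+1,n} = −1/√2`, `M_{n+1,n+1} = 1/√2`, and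
`M_{ab} = (1/√2)(i δ_{a,b′} − i δ_{ab})` for `a ≥ n+2` (all other entries zero) is
invertible, and `(M⁻¹)ᵗ J M⁻¹` is a real diagonal matrix with exactly one diagonal
entry `−1` (at position `n+1`) and the remaining `N−1` entries `+1`: the `q = 1`
metric acquires Lorentzian signature `(N−1, 1)`, identifying the real form associated
to the conjugation `∗♯` as the `q`-Lorentz group `SO_q(N−1, 1)`. -/
theorem lorentz_basis_even (n : ℕ) (hn : 2 ≤ n) :
    ∀ M : Matrix (Fin (2 * n)) (Fin (2 * n)) ℂ,
      M = Matrix.of (fun a b : Fin (2 * n) =>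
        if a.1 + 1 ≤ n then
          ((Real.sqrt 2 : ℂ))⁻¹ *
            ((if b = a then 1 else 0) + (if b = a.rev then 1 else 0))
        else if a.1 + 1 = n + 1 then
          ((Real.sqrt 2 : ℂ))⁻¹ *
            ((if b = a then 1 else 0) - (if b = a.rev then 1 else 0))
        else
          ((Real.sqrt 2 : ℂ))⁻¹ *
            (Complex.I * (if b = a.rev then 1 else 0) -
              Complex.I * (if b = a then 1 else 0))) →
      IsUnit M.det ∧
      (M⁻¹)ᵀ * Jmet (2 * n) * M⁻¹ =
        Matrix.diagonal (fun a : Fin (2 * n) =>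
          if a.1 + 1 = n + 1 then (-1 : ℂ) else 1) := by
  intro M hM
  have hs : ((Real.sqrt 2 : ℂ))⁻¹ * ((Real.sqrt 2 : ℂ))⁻¹ = 1 / 2 := by
    rw [← mul_inv, ← Complex.ofReal_mul, Real.mul_self_sqrt (by norm_num)]
    norm_num
  have hI : Complex.I * Complex.I = -1 := Complex.I_mul_I
  refine isUnit_det_and_inv_transpose_mul_mul_inv (Jmet_mul_self _) (Jmet_transpose _) ?_
    (Matrix.diagonal_transpose _) ?_
  · rw [Matrix.diagonal_mul_diagonal, ← Matrix.diagonal_one]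
    congr 1
    ext a
    split_ifs <;> norm_num
  generalize ((Real.sqrt 2 : ℂ))⁻¹ = s at hM hs
  ext a b
  rw [mul_Jmet_mul_transpose_apply
    (fun a => if a.1 + 1 ≤ n then s else if a.1 + 1 = n + 1 then s else -(s * Complex.I))
    (fun a => if a.1 + 1 ≤ n then s else if a.1 + 1 = n + 1 then -s else s * Complex.I)]
  · have hab : b ≠ a.rev ∨ b ≠ a := by
      by_contra! hc
      have := congrArg Fin.val (hc.1.symm.trans hc.2)
      rw [Fin.val_rev] at this
      omega
    by_cases h1 : b = a
    · subst h1
      have h2 : b ≠ b.rev := hab.resolve_right (by simp)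
      simp only [if_true, if_neg h2, Matrix.diagonal_apply_eq]
      split_ifs <;> first | omega | grind
    · rw [Matrix.diagonal_apply_ne' _ h1, if_neg h1]
      by_cases h2 : b = a.rev
      · have hv : b.1 = 2 * n - (a.1 + 1) := by rw [h2, Fin.val_rev]
        have ha := a.2
        rw [if_pos h2]
        split_ifs <;> first | omega | grind
      · simp [h2]
  · intro a b
    rw [hM, Matrix.of_apply]
    split_ifs <;> ring
end
end

section
/- Let N = 2n be even, fix signs ε_j ∈ {+1, −1} with ε_{j′} = −ε_j for all j, let D″ = i · diag(ε_1, …, ε_{2n}), and let A = diag(e^{−iε_1π/4}, …, e^{−iε_{2n}π/4}). Then A_{aa} · A_{a′a′} = 1 for all a (so A is a quantum orthogonal matrix, satisfying the RTT relation with R and Aᵗ C A = C), and D″ · A = conj(A), the entrywise complex conjugate of A. Consequently the automorphism α(T) = A T A⁻¹ intertwines the conjugation T ↦ D″ T D″⁻¹ composed with the trivial conjugation with the trivial conjugation itself, proving their equivalence. -/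
noncomputable section

open Matrix Kronecker

/-- A diagonal matrix `diag d` with `d_a d_{a′} = 1` satisfies the `RTT` relation. -/
lemma qRmat_mul_kronecker_diagonal (N : ℕ) (p : ℂ) (d : Fin N → ℂ)
    (hd : ∀ a, d a * d a.rev = 1) :
    qRmat N p * (diagonal d ⊗ₖ diagonal d) = (diagonal d ⊗ₖ diagonal d) * qRmat N p := by
  rw [diagonal_kronecker_diagonal]
  ext ⟨a, b⟩ ⟨c, e⟩
  rw [mul_diagonal, diagonal_mul]
  by_cases hR : qRmat N p (a, b) (c, e) = 0
  · simp [hR]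
  rw [mul_comm]
  congr 1
  simp only [qRmat, of_apply, Prod.mk.injEq] at hR
  split_ifs at hR <;> grind

/-- A diagonal matrix `diag d` with `d_a d_{a′} = 1` preserves the quantum metric. -/
lemma diagonal_transpose_mul_qMetric_mul (N : ℕ) (p : ℂ) (d : Fin N → ℂ)
    (hd : ∀ a, d a * d a.rev = 1) :
    (diagonal d)ᵀ * qMetric N p * diagonal d = qMetric N p := by
  ext a b
  rw [diagonal_transpose, mul_diagonal, diagonal_mul]
  simp only [qMetric, of_apply]
  split_ifs with h
  · rw [h, mul_right_comm, hd, one_mul]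
  · simp

/-- For a sign `s`, multiplication by `i s` conjugates the phase `e^{−isπ/4}`. -/
lemma I_mul_sign_mul_exp (s : ℝ) (hs : s = 1 ∨ s = -1) :
    Complex.I * (s : ℂ) * Complex.exp (-Complex.I * (s : ℂ) * (Real.pi : ℂ) / 4) =
      starRingEnd ℂ (Complex.exp (-Complex.I * (s : ℂ) * (Real.pi : ℂ) / 4)) := by
  have hconj : starRingEnd ℂ (Complex.exp (-Complex.I * (s : ℂ) * (Real.pi : ℂ) / 4)) =
      Complex.exp (Complex.I * (s : ℂ) * (Real.pi : ℂ) / 4) := by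
    rw [← Complex.exp_conj]
    simp [Complex.conj_ofNat]
  have hexp : Complex.I * (s : ℂ) = Complex.exp (Complex.I * (s : ℂ) * (Real.pi : ℂ) / 2) := by
    rcases hs with rfl | rfl
    · rw [Complex.ofReal_one, mul_one, mul_comm, mul_div_right_comm, Complex.exp_pi_div_two_mul_I]
    · rw [Complex.ofReal_neg, Complex.ofReal_one, mul_neg_one]
      refine Complex.exp_neg_pi_div_two_mul_I.symm.trans ?_
      congr 1
      ring
  rw [hexp, ← Complex.exp_add, hconj]
  congr 1
  ring

/-- Let `N = 2n` be even, fix signs `ε_j ∈ {+1,−1}` with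
`ε_{j′} = −ε_j`, let `D″ = i · diag(ε_1, …, ε_{2n})` and
`A = diag(e^{−iε_1π/4}, …, e^{−iε_{2n}π/4})`.  Then `A_{aa} · A_{a′a′} = 1` for all
`a` (so `A` is a quantum orthogonal matrix: `R·(A⊗A) = (A⊗A)·R` and `Aᵗ C A = C`),
and `D″ · A = conj A`.  Consequently the automorphism `α(T) = A T A⁻¹` intertwines
the conjugation built from `D″` with the trivial conjugation, proving their
equivalence. -/
theorem Dpp_A_intertwiner (n : ℕ) (hn : 2 ≤ n) (p : ℂ) (hp : p ≠ 0)
    (ε : Fin (2 * n) → ℝ) (hε : ∀ a, ε a = 1 ∨ ε a = -1)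
    (hanti : ∀ a : Fin (2 * n), ε a.rev = -ε a) :
    ∀ D A : Matrix (Fin (2 * n)) (Fin (2 * n)) ℂ,
      D = Matrix.diagonal (fun a => Complex.I * (ε a : ℂ)) →
      A = Matrix.diagonal (fun a =>
            Complex.exp (-Complex.I * (ε a : ℂ) * (Real.pi : ℂ) / 4)) →
      (∀ a : Fin (2 * n), A a a * A a.rev a.rev = 1) ∧
      qRmat (2 * n) p * (A ⊗ₖ A) = (A ⊗ₖ A) * qRmat (2 * n) p ∧
      Aᵀ * qMetric (2 * n) p * A = qMetric (2 * n) p ∧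
      D * A = A.map (starRingEnd ℂ) := by
  rintro D A rfl rfl
  have hd : ∀ a : Fin (2 * n),
      Complex.exp (-Complex.I * (ε a : ℂ) * (Real.pi : ℂ) / 4) *
        Complex.exp (-Complex.I * (ε a.rev : ℂ) * (Real.pi : ℂ) / 4) = 1 := by
    intro a
    rw [← Complex.exp_add, hanti, Complex.exp_eq_one_iff]
    exact ⟨0, by push_cast; ring⟩
  refine ⟨fun a => ?_, qRmat_mul_kronecker_diagonal _ p _ hd,
    diagonal_transpose_mul_qMetric_mul _ p _ hd, ?_⟩
  · rw [diagonal_apply_eq, diagonal_apply_eq]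
    exact hd a
  · rw [diagonal_mul_diagonal, diagonal_map (map_zero _)]
    congr 1
    ext1 a
    exact I_mul_sign_mul_exp (ε a) (hε a)
end
end
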